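/- For all integers m, n ≥ 1 with (m,n) ≠ (2,1), χ_la(P_{2m} ∨ O_{2n−1}) = 3; in the exceptional case, χ_la(P_4 ∨ O_1) = 4. -/

import Mathlib

open Finset SimpleGraph
open scoped Classical

/-- The induced vertex label (weight) of `x`: the sum of `f` over all edges incident to `x`. -/
noncomputable def vertexWeight {V : Type*} [Fintype V] (G : SimpleGraph V)
    (f : Sym2 V → ℕ) (x : V) : ℕ :=
  ∑ e ∈ G.edgeFinset.filter (fun e => x ∈ e), f e

/-- `f` is a local antimagic labeling of `G`: it restricts to a bijection from the edge set of
`G` onto `{1, …, q}` (where `q` is the number of edges), and adjacent vertices get distinct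
induced vertex labels. -/
def IsLocalAntimagic {V : Type*} [Fintype V] (G : SimpleGraph V) (f : Sym2 V → ℕ) : Prop :=
  Set.BijOn f G.edgeSet (Set.Icc 1 G.edgeSet.ncard) ∧
  ∀ ⦃x y : V⦄, G.Adj x y → vertexWeight G f x ≠ vertexWeight G f y

/-- The number of distinct induced vertex labels, `c(f)`. -/
noncomputable def colorCount {V : Type*} [Fintype V] (G : SimpleGraph V)
    (f : Sym2 V → ℕ) : ℕ :=
  (Finset.univ.image (vertexWeight G f)).card

/-- The local antimagic chromatic number `χ_la(G)`. -/
noncomputable def chiLA {V : Type*} [Fintype V] (G : SimpleGraph V) : ℕ :=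
  sInf { n | ∃ f : Sym2 V → ℕ, IsLocalAntimagic G f ∧ colorCount G f = n }

/-- The join `G ∨ H` of two vertex-disjoint graphs. -/
def joinG {α β : Type*} (G : SimpleGraph α) (H : SimpleGraph β) : SimpleGraph (α ⊕ β) :=
  SimpleGraph.fromRel (fun x y =>
    (∃ a b, x = Sum.inl a ∧ y = Sum.inl b ∧ G.Adj a b) ∨
    (∃ a b, x = Sum.inr a ∧ y = Sum.inr b ∧ H.Adj a b) ∨
    (∃ a b, x = Sum.inl a ∧ y = Sum.inr b))

lemma joinG_adj_ll {K k : ℕ} (i j : Fin K) :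
    (joinG (pathGraph K) (⊥ : SimpleGraph (Fin k))).Adj (Sum.inl i) (Sum.inl j) ↔
      (i.val + 1 = j.val ∨ j.val + 1 = i.val) := by
  simp only [joinG, SimpleGraph.fromRel_adj, pathGraph_adj]
  constructor
  · rintro ⟨_, h | h⟩ <;> simpa [or_comm] using h
  · intro h
    refine ⟨?_, Or.inl (Or.inl ⟨i, j, rfl, rfl, h⟩)⟩
    intro hij
    have := Sum.inl.inj hij
    subst this
    omega

lemma joinG_adj_lr {K k : ℕ} (i : Fin K) (c : Fin k) :
    (joinG (pathGraph K) (⊥ : SimpleGraph (Fin k))).Adj (Sum.inl i) (Sum.inr c) := by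
  simp [joinG, SimpleGraph.fromRel_adj]

lemma joinG_adj_rl {K k : ℕ} (i : Fin K) (c : Fin k) :
    (joinG (pathGraph K) (⊥ : SimpleGraph (Fin k))).Adj (Sum.inr c) (Sum.inl i) :=
  (joinG_adj_lr i c).symm

lemma joinG_adj_rr {K k : ℕ} (c d : Fin k) :
    ¬ (joinG (pathGraph K) (⊥ : SimpleGraph (Fin k))).Adj (Sum.inr c) (Sum.inr d) := by
  simp [joinG, SimpleGraph.fromRel_adj]

lemma vertexWeight_eq {V : Type*} [Fintype V] (G : SimpleGraph V) (f : Sym2 V → ℕ) (x : V) :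
    vertexWeight G f x = ∑ y, if G.Adj x y then f s(x, y) else 0 := by
  unfold vertexWeight
  rw [← Finset.sum_filter]
  have : G.edgeFinset.filter (fun e => x ∈ e) =
      (Finset.univ.filter (fun y => G.Adj x y)).image (fun y => s(x, y)) := by
    ext e
    induction e using Sym2.ind with
    | _ u v =>
      simp only [Finset.mem_filter, mem_edgeFinset, mem_edgeSet, Sym2.mem_iff, Finset.mem_image,
        Finset.mem_univ, true_and]
      constructor
      · rintro ⟨h, rfl | rfl⟩
        · exact ⟨v, h, rfl⟩
        · exact ⟨u, h.symm, Sym2.eq_swap⟩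
      · rintro ⟨y, hy, he⟩
        rw [Sym2.eq_iff] at he
        rcases he with ⟨rfl, rfl⟩ | ⟨rfl, rfl⟩
        · exact ⟨hy, Or.inl rfl⟩
        · exact ⟨hy.symm, Or.inr rfl⟩
  rw [this, Finset.sum_image]
  intro y _ z _ h
  exact Sym2.congr_right.1 h

/-- index type of edges -/
abbrev EIdx (K k : ℕ) := Fin (K - 1) ⊕ (Fin K × Fin k)

/-- the edge with a given index -/
def edgeOf (K k : ℕ) : EIdx K k → Sym2 (Fin K ⊕ Fin k)
  | Sum.inl i => s(Sum.inl ⟨i.val, by omega⟩, Sum.inl ⟨i.val + 1, by omega⟩)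
  | Sum.inr p => s(Sum.inl p.1, Sum.inr p.2)

lemma range_edgeOf (K k : ℕ) : Set.range (edgeOf K k) =
    (joinG (pathGraph K) (⊥ : SimpleGraph (Fin k))).edgeSet := by
  ext e
  constructor
  · rintro ⟨x, rfl⟩
    rcases x with i | ⟨i, c⟩
    · simp only [edgeOf, mem_edgeSet, joinG_adj_ll]
      left; trivial
    · exact joinG_adj_lr i c
  · induction e using Sym2.ind with
    | _ u v =>
      intro h
      rw [mem_edgeSet] at h
      rcases u with i | c <;> rcases v with j | d
      · rw [joinG_adj_ll] at h
        rcases h with h | h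
        · refine ⟨Sum.inl ⟨i.val, by omega⟩, ?_⟩
          simp only [edgeOf, h]
        · refine ⟨Sum.inl ⟨j.val, by omega⟩, ?_⟩
          simp only [edgeOf, h]
          exact Sym2.eq_swap
      · exact ⟨Sum.inr (i, d), rfl⟩
      · exact ⟨Sum.inr (j, c), Sym2.eq_swap⟩
      · exact absurd h (joinG_adj_rr c d)

lemma edgeOf_injective (K k : ℕ) : Function.Injective (edgeOf K k) := by
  rintro (i | ⟨i, c⟩) (j | ⟨j, d⟩) h
  · simp only [edgeOf, Sym2.eq_iff, Sum.inl.injEq, Fin.mk.injEq] at h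
    congr 1
    ext
    omega
  · simp [edgeOf] at h
  · simp [edgeOf] at h
  · simp [edgeOf] at h
    simp [h]

lemma ncard_edgeSet (K k : ℕ) :
    (joinG (pathGraph K) (⊥ : SimpleGraph (Fin k))).edgeSet.ncard = K - 1 + K * k := by
  rw [← range_edgeOf, ← Set.image_univ, Set.ncard_image_of_injective _ (edgeOf_injective K k),
    Set.ncard_univ]
  simp [EIdx]

/-- The labeling built from path labels and rectangle labels -/
def mkG {K k : ℕ} (e : ℕ → ℕ) (s : ℕ → ℕ → ℕ) : Fin K ⊕ Fin k → Fin K ⊕ Fin k → ℕ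
  | Sum.inl i, Sum.inl j => e (max i.val j.val)
  | Sum.inl i, Sum.inr c => s i.val c.val
  | Sum.inr c, Sum.inl i => s i.val c.val
  | Sum.inr _, Sum.inr _ => 0

/-- The labeling on unordered pairs -/
def mkF {K k : ℕ} (e : ℕ → ℕ) (s : ℕ → ℕ → ℕ) : Sym2 (Fin K ⊕ Fin k) → ℕ :=
  Sym2.lift ⟨mkG e s, by
    rintro (i | c) (j | d) <;> simp [mkG, max_comm]⟩

lemma mkF_mk {K k : ℕ} (e : ℕ → ℕ) (s : ℕ → ℕ → ℕ) (x y : Fin K ⊕ Fin k) :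
    mkF e s s(x, y) = mkG e s x y := rfl

lemma weight_inl {K k : ℕ} (e : ℕ → ℕ) (s : ℕ → ℕ → ℕ) (h0 : e 0 = 0) (hK : e K = 0)
    (i : Fin K) :
    vertexWeight (joinG (pathGraph K) (⊥ : SimpleGraph (Fin k))) (mkF e s) (Sum.inl i) =
      e i.val + e (i.val + 1) + ∑ c ∈ Finset.range k, s i.val c := by
  rw [vertexWeight_eq, Fintype.sum_sum_type]
  congr 1
  · have h1 : ∀ j : Fin K, (if (joinG (pathGraph K) (⊥ : SimpleGraph (Fin k))).Adj
        (Sum.inl i) (Sum.inl j) then mkF (k := k) e s s(Sum.inl i, Sum.inl j) else 0) =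
        (fun j : ℕ => (if j + 1 = i.val then e i.val else 0) +
          (if j = i.val + 1 then e (i.val + 1) else 0)) j.val := by
      intro j
      simp only [joinG_adj_ll, mkF_mk, mkG]
      by_cases ha : j.val + 1 = i.val
      · have : ¬ (j.val = i.val + 1) := by omega
        have h3 : max i.val j.val = i.val := by omega
        simp [ha, this, h3]
      · by_cases hb : j.val = i.val + 1
        · have h3 : max i.val j.val = i.val + 1 := by omega
          simp [hb]
          intro; omega
        · have : ¬ (i.val + 1 = j.val) := by omega
          simp [ha, hb, this]
    rw [Finset.sum_congr rfl (fun j _ => h1 j), Fin.sum_univ_eq_sum_range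
      (fun j : ℕ => (if j + 1 = i.val then e i.val else 0) +
          (if j = i.val + 1 then e (i.val + 1) else 0)) K, Finset.sum_add_distrib]
    congr 1
    · rcases Nat.eq_zero_or_pos i.val with h | h
      · rw [h]; simp [h0]
      · have : ∀ j, (j + 1 = i.val) ↔ (j = i.val - 1) := by intro j; omega
        simp only [this]
        rw [Finset.sum_ite_eq', if_pos]
        have := i.isLt
        simp; omega
    · rw [Finset.sum_ite_eq']
      split_ifs with h
      · rfl
      · have := i.isLt
        have : i.val + 1 = K := by simp at h; omega
        rw [this, hK]
  · rw [← Fin.sum_univ_eq_sum_range (fun c => s i.val c)]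
    refine Finset.sum_congr rfl fun c _ => ?_
    rw [if_pos (joinG_adj_lr i c)]; rfl

lemma weight_inr {K k : ℕ} (e : ℕ → ℕ) (s : ℕ → ℕ → ℕ) (c : Fin k) :
    vertexWeight (joinG (pathGraph K) (⊥ : SimpleGraph (Fin k))) (mkF e s) (Sum.inr c) =
      ∑ i ∈ Finset.range K, s i c.val := by
  rw [vertexWeight_eq, Fintype.sum_sum_type]
  have : ∑ d : Fin k, (if (joinG (pathGraph K) (⊥ : SimpleGraph (Fin k))).Adj
        (Sum.inr c) (Sum.inr d) then mkF (K := K) e s s(Sum.inr c, Sum.inr d) else 0) = 0 := by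
    refine Finset.sum_eq_zero fun d _ => if_neg (joinG_adj_rr c d)
  rw [this, add_zero, ← Fin.sum_univ_eq_sum_range (fun i => s i c.val)]
  refine Finset.sum_congr rfl fun i _ => ?_
  rw [if_pos (joinG_adj_rl i c)]; rfl

/-- conditions guaranteeing that the labeling is a bijection -/
structure GoodLabels (K k : ℕ) (e : ℕ → ℕ) (s : ℕ → ℕ → ℕ) : Prop where
  e_pos : ∀ i, 1 ≤ i → i < K → 1 ≤ e i ∧ e i ≤ K - 1 + K * k
  s_pos : ∀ i c, i < K → c < k → 1 ≤ s i c ∧ s i c ≤ K - 1 + K * k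
  e_inj : ∀ i j, 1 ≤ i → i < K → 1 ≤ j → j < K → e i = e j → i = j
  s_inj : ∀ i c j d, i < K → c < k → j < K → d < k → s i c = s j d → i = j ∧ c = d
  e_ne_s : ∀ i j c, 1 ≤ i → i < K → j < K → c < k → e i ≠ s j c

lemma GoodLabels.bijOn {K k : ℕ} {e : ℕ → ℕ} {s : ℕ → ℕ → ℕ} (h : GoodLabels K k e s) :
    Set.BijOn (mkF e s) (joinG (pathGraph K) (⊥ : SimpleGraph (Fin k))).edgeSet
      (Set.Icc 1 (joinG (pathGraph K) (⊥ : SimpleGraph (Fin k))).edgeSet.ncard) := by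
  have hmaps : Set.MapsTo (mkF e s) (joinG (pathGraph K) (⊥ : SimpleGraph (Fin k))).edgeSet
      (Set.Icc 1 (joinG (pathGraph K) (⊥ : SimpleGraph (Fin k))).edgeSet.ncard) := by
    rw [ncard_edgeSet, ← range_edgeOf]
    rintro _ ⟨x, rfl⟩
    rcases x with i | ⟨i, c⟩
    · simp only [edgeOf, mkF_mk, mkG]
      have := h.e_pos (i.val + 1) (by omega) (by omega)
      simpa using this
    · exact h.s_pos i.val c.val i.isLt c.isLt
  have hinj : Set.InjOn (mkF e s) (joinG (pathGraph K) (⊥ : SimpleGraph (Fin k))).edgeSet := by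
    rw [← range_edgeOf]
    rintro _ ⟨x, rfl⟩ _ ⟨y, rfl⟩ hxy
    congr 1
    rcases x with i | ⟨i, c⟩ <;> rcases y with j | ⟨j, d⟩ <;>
      simp only [edgeOf, mkF_mk, mkG] at hxy
    · simp only [Nat.le_add_right, sup_of_le_right] at hxy
      have := h.e_inj (i.val + 1) (j.val + 1) (by omega) (by omega) (by omega) (by omega) hxy
      congr 1; ext; omega
    · simp only [Nat.le_add_right, sup_of_le_right] at hxy
      exact absurd hxy (h.e_ne_s _ _ _ (by omega) (by omega) j.isLt d.isLt)
    · simp only [Nat.le_add_right, sup_of_le_right] at hxy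
      exact absurd hxy.symm (h.e_ne_s _ _ _ (by omega) (by omega) i.isLt c.isLt)
    · have := h.s_inj i.val c.val j.val d.val i.isLt c.isLt j.isLt d.isLt hxy
      have h1 : i = j := by ext; exact this.1
      have h2 : c = d := by ext; exact this.2
      rw [h1, h2]
  refine ⟨hmaps, hinj, ?_⟩
  have himg := Set.eq_of_subset_of_ncard_le hmaps.image_subset ?_ (Set.finite_Icc _ _)
  · exact himg.symm.subset
  · rw [hinj.ncard_image, ← Finset.coe_Icc, Set.ncard_coe_finset]
    simp

lemma three_le {K k : ℕ} (hK : 2 ≤ K) (hk : 1 ≤ k) (f : Sym2 (Fin K ⊕ Fin k) → ℕ)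
    (hf : IsLocalAntimagic (joinG (pathGraph K) (⊥ : SimpleGraph (Fin k))) f) :
    3 ≤ colorCount (joinG (pathGraph K) (⊥ : SimpleGraph (Fin k))) f := by
  set w := vertexWeight (joinG (pathGraph K) (⊥ : SimpleGraph (Fin k))) f with hw
  have h1 : w (Sum.inl ⟨0, by omega⟩) ≠ w (Sum.inl ⟨1, by omega⟩) :=
    hf.2 ((joinG_adj_ll _ _).2 (Or.inl rfl))
  have h2 : w (Sum.inl ⟨0, by omega⟩) ≠ w (Sum.inr ⟨0, by omega⟩) := hf.2 (joinG_adj_lr _ _)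
  have h3 : w (Sum.inl ⟨1, by omega⟩) ≠ w (Sum.inr ⟨0, by omega⟩) := hf.2 (joinG_adj_lr _ _)
  have hc : ({w (Sum.inl ⟨0, by omega⟩), w (Sum.inl ⟨1, by omega⟩),
      w (Sum.inr ⟨0, by omega⟩)} : Finset ℕ).card = 3 := by
    rw [Finset.card_eq_three]; exact ⟨_, _, _, h1, h2, h3, rfl⟩
  unfold colorCount
  rw [← hc]
  apply Finset.card_le_card
  intro x hx
  simp only [Finset.mem_insert, Finset.mem_singleton] at hx
  rw [Finset.mem_image]
  rcases hx with rfl | rfl | rfl <;> exact ⟨_, Finset.mem_univ _, rfl⟩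

lemma chiLA_eq_three {K k : ℕ} (hK : 2 ≤ K) (hk : 1 ≤ k) (e : ℕ → ℕ) (s : ℕ → ℕ → ℕ)
    (a b C : ℕ) (h0 : e 0 = 0) (h1 : e K = 0) (hg : GoodLabels K k e s)
    (hrow : ∀ i < K, e i + e (i + 1) + ∑ c ∈ Finset.range k, s i c = if i % 2 = 0 then a else b)
    (hcol : ∀ c < k, ∑ i ∈ Finset.range K, s i c = C)
    (hab : a ≠ b) (haC : a ≠ C) (hbC : b ≠ C) :
    chiLA (joinG (pathGraph K) (⊥ : SimpleGraph (Fin k))) = 3 := by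
  have hl : ∀ i : Fin K, vertexWeight (joinG (pathGraph K) (⊥ : SimpleGraph (Fin k)))
      (mkF e s) (Sum.inl i) = if i.val % 2 = 0 then a else b := by
    intro i; rw [weight_inl e s h0 h1, hrow i.val i.isLt]
  have hr : ∀ c : Fin k, vertexWeight (joinG (pathGraph K) (⊥ : SimpleGraph (Fin k)))
      (mkF e s) (Sum.inr c) = C := by
    intro c; rw [weight_inr e s, hcol c.val c.isLt]
  have hla : IsLocalAntimagic (joinG (pathGraph K) (⊥ : SimpleGraph (Fin k))) (mkF e s) := by
    refine ⟨hg.bijOn, ?_⟩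
    rintro (i | c) (j | d) hadj
    · rw [hl, hl]
      rw [joinG_adj_ll] at hadj
      split_ifs <;> omega
    · rw [hl, hr]; split_ifs <;> assumption
    · rw [hl, hr]; split_ifs <;> exact Ne.symm (by assumption)
    · exact absurd hadj (joinG_adj_rr c d)
  have hcc : colorCount (joinG (pathGraph K) (⊥ : SimpleGraph (Fin k))) (mkF e s) = 3 := by
    refine le_antisymm ?_ (three_le hK hk _ hla)
    have hsub : Finset.univ.image (vertexWeight (joinG (pathGraph K) (⊥ : SimpleGraph (Fin k)))
        (mkF e s)) ⊆ {a, b, C} := by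
      intro x hx
      obtain ⟨v, _, rfl⟩ := Finset.mem_image.1 hx
      rcases v with i | c
      · rw [hl]; split_ifs <;> simp
      · rw [hr]; simp
    exact (Finset.card_le_card hsub).trans Finset.card_le_three
  apply le_antisymm
  · exact Nat.sInf_le ⟨_, hla, hcc⟩
  · refine le_csInf ⟨3, _, hla, hcc⟩ ?_
    rintro n ⟨f, hf, rfl⟩
    exact three_le hK hk f hf

/-- interleave two sequences -/
def il (x y : ℕ → ℕ) (i : ℕ) : ℕ := if i % 2 = 0 then x (i / 2) else y (i / 2)

lemma il_even (x y : ℕ → ℕ) (j : ℕ) : il x y (2 * j) = x j := by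
  simp [il]

lemma il_odd (x y : ℕ → ℕ) (j : ℕ) : il x y (2 * j + 1) = y j := by
  have h1 : (2 * j + 1) % 2 = 1 := by omega
  have h2 : (2 * j + 1) / 2 = j := by omega
  simp [il, h1, h2]

lemma even_or_odd_lt {i m : ℕ} (h : i < 2 * m) : ∃ j < m, i = 2 * j ∨ i = 2 * j + 1 :=
  ⟨i / 2, by omega, by omega⟩

lemma sum_il (x y : ℕ → ℕ) (m : ℕ) :
    ∑ i ∈ Finset.range (2 * m), il x y i = ∑ j ∈ Finset.range m, (x j + y j) := by
  induction m with
  | zero => simp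
  | succ m ih =>
    rw [show 2 * (m + 1) = 2 * m + 1 + 1 by ring, Finset.sum_range_succ, Finset.sum_range_succ,
      Finset.sum_range_succ, ih, il_even, il_odd]
    ring

lemma good_of_halves (m k q : ℕ) (hq : q = 2 * m - 1 + 2 * m * k) (eE eO : ℕ → ℕ)
    (sE sO : ℕ → ℕ → ℕ)
    (r1 : ∀ j, 1 ≤ j → j < m → 1 ≤ eE j ∧ eE j ≤ q)
    (r2 : ∀ j, j < m → 1 ≤ eO j ∧ eO j ≤ q)
    (r3 : ∀ j c, j < m → c < k → 1 ≤ sE j c ∧ sE j c ≤ q)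
    (r4 : ∀ j c, j < m → c < k → 1 ≤ sO j c ∧ sO j c ≤ q)
    (i1 : ∀ i j, 1 ≤ i → i < m → 1 ≤ j → j < m → eE i = eE j → i = j)
    (i2 : ∀ i j, i < m → j < m → eO i = eO j → i = j)
    (i3 : ∀ i j, 1 ≤ i → i < m → j < m → eE i ≠ eO j)
    (i4 : ∀ i c j d, i < m → c < k → j < m → d < k → sE i c = sE j d → i = j ∧ c = d)
    (i5 : ∀ i c j d, i < m → c < k → j < m → d < k → sO i c = sO j d → i = j ∧ c = d)
    (i6 : ∀ i c j d, i < m → c < k → j < m → d < k → sE i c ≠ sO j d)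
    (i7 : ∀ i j c, 1 ≤ i → i < m → j < m → c < k → eE i ≠ sE j c)
    (i8 : ∀ i j c, 1 ≤ i → i < m → j < m → c < k → eE i ≠ sO j c)
    (i9 : ∀ i j c, i < m → j < m → c < k → eO i ≠ sE j c)
    (i10 : ∀ i j c, i < m → j < m → c < k → eO i ≠ sO j c) :
    GoodLabels (2 * m) k (il eE eO) (fun i c => il (fun j => sE j c) (fun j => sO j c) i) := by
  subst hq
  constructor
  · intro i h1 h2
    obtain ⟨j, hj, rfl | rfl⟩ := even_or_odd_lt h2
    · rw [il_even]; exact r1 j (by omega) hj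
    · rw [il_odd]; exact r2 j hj
  · intro i c h2 hc
    obtain ⟨j, hj, rfl | rfl⟩ := even_or_odd_lt h2
    · rw [il_even]; exact r3 j c hj hc
    · rw [il_odd]; exact r4 j c hj hc
  · intro i i' h1 h2 h1' h2' h
    obtain ⟨j, hj, rfl | rfl⟩ := even_or_odd_lt h2 <;>
    obtain ⟨j', hj', rfl | rfl⟩ := even_or_odd_lt h2' <;>
    simp only [il_even, il_odd] at h
    · rw [i1 j j' (by omega) hj (by omega) hj' h]
    · exact absurd h (i3 j j' (by omega) hj hj')
    · exact absurd h.symm (i3 j' j (by omega) hj' hj)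
    · rw [i2 j j' hj hj' h]
  · intro i c i' d h2 hc h2' hd h
    obtain ⟨j, hj, rfl | rfl⟩ := even_or_odd_lt h2 <;>
    obtain ⟨j', hj', rfl | rfl⟩ := even_or_odd_lt h2' <;>
    simp only [il_even, il_odd] at h
    · have := i4 j c j' d hj hc hj' hd h; omega
    · exact absurd h (i6 j c j' d hj hc hj' hd)
    · exact absurd h.symm (i6 j' d j c hj' hd hj hc)
    · have := i5 j c j' d hj hc hj' hd h; omega
  · intro i i' c h1 h2 h2' hc
    obtain ⟨j, hj, rfl | rfl⟩ := even_or_odd_lt h2 <;>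
    obtain ⟨j', hj', rfl | rfl⟩ := even_or_odd_lt h2' <;>
    simp only [il_even, il_odd]
    · exact i7 j j' c (by omega) hj hj' hc
    · exact i8 j j' c (by omega) hj hj' hc
    · exact i9 j j' c hj hj' hc
    · exact i10 j j' c hj hj' hc

/-- The fan case: labels of the spokes are determined by the path labels. -/
lemma fan_case (m a b L : ℕ) (hm : 1 ≤ m) (eE eO sE sO : ℕ → ℕ)
    (h0 : eE 0 = 0) (h1 : eE m = 0)
    (hE : ∀ j, j < m → eE j + eO j + sE j = a)
    (hO : ∀ j, j < m → eO j + eE (j + 1) + sO j = b)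
    (r1 : ∀ j, 1 ≤ j → j < m → 1 ≤ eE j ∧ eE j ≤ 4 * m - 1)
    (r2 : ∀ j, j < m → 1 ≤ eO j ∧ eO j ≤ 4 * m - 1)
    (r3 : ∀ j, j < m → 1 ≤ sE j ∧ sE j ≤ 4 * m - 1)
    (r4 : ∀ j, j < m → 1 ≤ sO j ∧ sO j ≤ 4 * m - 1)
    (i1 : ∀ i j, 1 ≤ i → i < m → 1 ≤ j → j < m → eE i = eE j → i = j)
    (i2 : ∀ i j, i < m → j < m → eO i = eO j → i = j)
    (i3 : ∀ i j, 1 ≤ i → i < m → j < m → eE i ≠ eO j)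
    (i4 : ∀ i j, i < m → j < m → sE i = sE j → i = j)
    (i5 : ∀ i j, i < m → j < m → sO i = sO j → i = j)
    (i6 : ∀ i j, i < m → j < m → sE i ≠ sO j)
    (i7 : ∀ i j, 1 ≤ i → i < m → j < m → eE i ≠ sE j)
    (i8 : ∀ i j, 1 ≤ i → i < m → j < m → eE i ≠ sO j)
    (i9 : ∀ i j, i < m → j < m → eO i ≠ sE j)
    (i10 : ∀ i j, i < m → j < m → eO i ≠ sO j)
    (hab : a ≠ b) (hL : ∀ j, j < m → L ≤ sE j + sO j) (ha : a < m * L) (hb : b < m * L) :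
    chiLA (joinG (pathGraph (2 * m)) (⊥ : SimpleGraph (Fin 1))) = 3 := by
  have hC : m * L ≤ ∑ j ∈ Finset.range m, (sE j + sO j) := by
    have := Finset.card_nsmul_le_sum (Finset.range m) (fun j => sE j + sO j) L
      (fun j hj => hL j (Finset.mem_range.1 hj))
    simpa using this
  refine chiLA_eq_three (by omega) le_rfl (il eE eO)
    (fun i c => il (fun j => (fun j _ => sE j : ℕ → ℕ → ℕ) j c)
      (fun j => (fun j _ => sO j : ℕ → ℕ → ℕ) j c) i) a b
    (∑ j ∈ Finset.range m, (sE j + sO j)) ?_ ?_ ?_ ?_ ?_ hab ?_ ?_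
  · simpa [il] using h0
  · rw [il_even]; exact h1
  · refine good_of_halves m 1 (4 * m - 1) (by omega) eE eO (fun j _ => sE j) (fun j _ => sO j)
      r1 r2 (fun j _ h _ => r3 j h) (fun j _ h _ => r4 j h) i1 i2 i3
      (fun i c j d h1 h2 h3 h4 h => ⟨i4 i j h1 h3 h, by omega⟩)
      (fun i c j d h1 h2 h3 h4 h => ⟨i5 i j h1 h3 h, by omega⟩)
      (fun i c j d h1 h2 h3 h4 => i6 i j h1 h3)
      (fun i j c h1 h2 h3 h4 => i7 i j h1 h2 h3) (fun i j c h1 h2 h3 h4 => i8 i j h1 h2 h3)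
      (fun i j c h1 h2 h3 => i9 i j h1 h2) (fun i j c h1 h2 h3 => i10 i j h1 h2)
  · intro i hi
    obtain ⟨j, hj, rfl | rfl⟩ := even_or_odd_lt hi
    · simp only [il_even, il_odd, Finset.sum_range_one]
      rw [hE j hj]; simp
    · rw [show 2 * j + 1 + 1 = 2 * (j + 1) by ring]
      simp only [il_even, il_odd, Finset.sum_range_one]
      rw [hO j hj, if_neg (by omega)]
  · intro c _
    exact sum_il _ _ m
  · omega
  · omega

lemma fan_odd (r : ℕ) (hr : 1 ≤ r) :
    chiLA (joinG (pathGraph (2 * (2 * r + 1))) (⊥ : SimpleGraph (Fin 1))) = 3 := by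
  refine fan_case (2 * r + 1) (9 * r + 3) (11 * r + 4) (8 * r + 4) (by omega)
    (fun j => if j = 2 * r + 1 then 0 else j)
    (fun j => if j < r then 3 * r + 2 + j else r + 1 + j)
    (fun j => if j < r then 6 * r + 1 - 2 * j else 8 * r + 2 - 2 * j)
    (fun j => if j < r then 8 * r + 1 - 2 * j else if j < 2 * r then 10 * r + 2 - 2 * j
      else 8 * r + 3)
    ?_ ?_ ?_ ?_ ?_ ?_ ?_ ?_ ?_ ?_ ?_ ?_ ?_ ?_ ?_ ?_ ?_ ?_ ?_ ?_ ?_ ?_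
  all_goals (intros; grind)

lemma fan_four (r : ℕ) (hr : 1 ≤ r) :
    chiLA (joinG (pathGraph (2 * (4 * r))) (⊥ : SimpleGraph (Fin 1))) = 3 := by
  refine fan_case (4 * r) (19 * r - 2) (21 * r - 1) (8 * r) (by omega)
    (fun j => if j = 4 * r then 0 else j)
    (fun j => if j < r then 5 * r - 1 + j else if j < 2 * r - 1 then 3 * r + j else
      if j < 3 * r - 1 then 5 * r + 1 + j else 3 * r + j)
    (fun j => if j < r then 14 * r - 1 - 2 * j else if j < 2 * r - 1 then 16 * r - 2 - 2 * j else
      if j < 3 * r - 1 then 14 * r - 3 - 2 * j else 16 * r - 2 - 2 * j)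
    (fun j => if j < r then 16 * r - 1 - 2 * j else if j < 2 * r - 1 then 18 * r - 2 - 2 * j else
      if j < 3 * r - 1 then 16 * r - 3 - 2 * j else
      if j < 4 * r - 1 then 18 * r - 2 - 2 * j else 14 * r)
    ?_ ?_ ?_ ?_ ?_ ?_ ?_ ?_ ?_ ?_ ?_ ?_ ?_ ?_ ?_ ?_ ?_ ?_ ?_ ?_ ?_ ?_
  all_goals first | (intros; grind) | (have : r ≤ r * r := by nlinarith
                                       have : 4 * r * (8 * r) = 32 * (r * r) := by ring
                                       omega)

lemma fan_two (r : ℕ) (hr : 1 ≤ r) :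
    chiLA (joinG (pathGraph (2 * (4 * r + 2))) (⊥ : SimpleGraph (Fin 1))) = 3 := by
  refine fan_case (4 * r + 2) (21 * r + 9) (19 * r + 9) (12 * r) (by omega)
    (fun j => if j = 4 * r + 2 then 0 else j)
    (fun j => if j < r + 1 then 5 * r + 2 + j else if j < 2 * r + 1 then 3 * r + 1 + j else
      if j < 3 * r then 5 * r + 4 + j else if j = 3 * r then 10 * r + 5 else 3 * r + 3 + j)
    (fun j => if j < r + 1 then 16 * r + 7 - 2 * j else if j < 2 * r + 1 then 18 * r + 8 - 2 * j
      else if j < 3 * r then 16 * r + 5 - 2 * j else if j = 3 * r then 8 * r + 4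
      else 18 * r + 6 - 2 * j)
    (fun j => if j < r + 1 then 14 * r + 6 - 2 * j else if j < 2 * r + 1 then 16 * r + 7 - 2 * j
      else if j < 3 * r then 14 * r + 4 - 2 * j else if j = 3 * r then 6 * r + 3
      else if j < 4 * r + 1 then 16 * r + 5 - 2 * j else 12 * r + 5)
    ?_ ?_ ?_ ?_ ?_ ?_ ?_ ?_ ?_ ?_ ?_ ?_ ?_ ?_ ?_ ?_ ?_ ?_ ?_ ?_ ?_ ?_
  all_goals first | (intros; grind) | (intro i j hi hj h; split_ifs at h <;> omega)
                  | skip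
  all_goals
    have h1 : r ≤ r * r := by nlinarith
    have h2 : (4 * r + 2) * (12 * r) = 48 * (r * r) + 24 * r := by ring
    omega

lemma fan_one :
    chiLA (joinG (pathGraph (2 * 1)) (⊥ : SimpleGraph (Fin 1))) = 3 := by
  refine fan_case 1 3 4 5 (by omega) (fun _ => 0) (fun _ => 1) (fun _ => 2) (fun _ => 3)
    ?_ ?_ ?_ ?_ ?_ ?_ ?_ ?_ ?_ ?_ ?_ ?_ ?_ ?_ ?_ ?_ ?_ ?_ ?_ ?_ ?_ ?_
  all_goals (intros; omega)

/-- rectangle labels of even rows -/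
def bE (m H j c : ℕ) : ℕ :=
  if c = 0 then H + m - 1 - 2 * j else if c = 2 then H - 3 * m + j
  else if c % 2 = 1 then H + m * c + j else H - 1 - m * c - j

/-- rectangle labels of odd rows -/
def bO (m H j c : ℕ) : ℕ :=
  if c = 0 then H - m + 2 * j
  else if c = 2 then (if j + 1 = m then H + 3 * m - 1 else H + 3 * m - 2 - j)
  else if c % 2 = 1 then H - 1 - m * c - j else H + m * c + j

lemma sum_bE (m H j N : ℕ) (hj : j < m) (hH : m * (2 * N + 3) + 2 * m ≤ H) :
    ∑ c ∈ Finset.range (2 * N + 3), bE m H j c = 3 * H - m - 1 + N * (2 * H - 1 - m) := by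
  induction N with
  | zero =>
    simp only [Finset.sum_range_succ, Finset.sum_range_zero, bE]
    simp
    omega
  | succ N ih =>
    have e1 : m * (2 * (N + 1) + 3) = m * (2 * N + 3) + 2 * m := by ring
    have e2 : m * (2 * N + 4) = m * (2 * N + 3) + m := by ring
    rw [show 2 * (N + 1) + 3 = 2 * N + 3 + 1 + 1 by ring, Finset.sum_range_succ,
      Finset.sum_range_succ, ih (by omega), add_mul]
    have h1 : bE m H j (2 * N + 3) = H + m * (2 * N + 3) + j := by
      unfold bE
      rw [if_neg (by omega), if_neg (by omega), if_pos (by omega)]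
    have h2 : bE m H j (2 * N + 3 + 1) = H - 1 - m * (2 * N + 4) - j := by
      unfold bE
      rw [if_neg (by omega), if_neg (by omega), if_neg (by omega)]
    rw [h1, h2]
    omega

lemma sum_bO (m H j N : ℕ) (hj : j < m) (hH : m * (2 * N + 3) + 2 * m ≤ H) :
    ∑ c ∈ Finset.range (2 * N + 3), bO m H j c =
      (if j + 1 = m then 3 * H + 2 * m - 3 else 3 * H + m - 3) + N * (2 * H - 1 + m) := by
  induction N with
  | zero =>
    simp only [Finset.sum_range_succ, Finset.sum_range_zero, bO]
    simp
    split_ifs <;> omega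
  | succ N ih =>
    have e1 : m * (2 * (N + 1) + 3) = m * (2 * N + 3) + 2 * m := by ring
    have e2 : m * (2 * N + 4) = m * (2 * N + 3) + m := by ring
    rw [show 2 * (N + 1) + 3 = 2 * N + 3 + 1 + 1 by ring, Finset.sum_range_succ,
      Finset.sum_range_succ, ih (by omega), add_mul]
    have h1 : bO m H j (2 * N + 3) = H - 1 - m * (2 * N + 3) - j := by
      unfold bO
      rw [if_neg (by omega), if_neg (by omega), if_pos (by omega)]
    have h2 : bO m H j (2 * N + 3 + 1) = H + m * (2 * N + 4) + j := by
      unfold bO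
      rw [if_neg (by omega), if_neg (by omega), if_neg (by omega)]
    rw [h1, h2]
    omega

lemma col_sum (m H N c : ℕ) (hm : 1 ≤ m) (hH : m * (2 * N + 3) + 2 * m ≤ H)
    (hc : c < 2 * N + 3) :
    ∑ j ∈ Finset.range m, (bE m H j c + bO m H j c) = m * (2 * H - 1) := by
  have hX : m * c + m ≤ m * (2 * N + 3) := by
    calc m * c + m = m * (c + 1) := by ring
      _ ≤ _ := Nat.mul_le_mul_left _ (by omega)
  by_cases h2 : c = 2
  · subst h2
    obtain ⟨M, rfl⟩ : ∃ M, m = M + 1 := ⟨m - 1, by omega⟩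
    rw [Finset.sum_range_succ]
    have h3 : ∀ j ∈ Finset.range M, bE (M + 1) H j 2 + bO (M + 1) H j 2 = 2 * H - 2 := by
      intro j hj
      rw [Finset.mem_range] at hj
      simp [bE, bO]
      rw [if_neg (by omega)]
      omega
    rw [Finset.sum_congr rfl h3]
    simp [bE, bO]
    have : 2 * H - 1 = (2 * H - 2) + 1 := by omega
    rw [this]
    generalize hg : 2 * H - 2 = g
    have : (M + 1) * (g + 1) = M * g + M + g + 1 := by ring
    rw [this]
    omega
  · have h3 : ∀ j ∈ Finset.range m, bE m H j c + bO m H j c = 2 * H - 1 := by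
      intro j hj
      rw [Finset.mem_range] at hj
      unfold bE bO
      split_ifs <;> omega
    rw [Finset.sum_congr rfl h3]
    simp

lemma big_case (m N : ℕ) (hm : 1 ≤ m) :
    chiLA (joinG (pathGraph (2 * m)) (⊥ : SimpleGraph (Fin (2 * N + 3)))) = 3 := by
  obtain ⟨H, hH⟩ : ∃ H, H = m * (2 * N + 3) + 2 * m := ⟨_, rfl⟩
  have hX : ∀ c, c < 2 * N + 3 → m * c + 3 * m ≤ H := by
    intro c hc
    have : m * c + m ≤ m * (2 * N + 3) := by
      calc m * c + m = m * (c + 1) := by ring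
        _ ≤ _ := Nat.mul_le_mul_left _ (by omega)
    omega
  have h0 : ∀ c, c = 0 → m * c = 0 := by rintro c rfl; simp
  have h2 : ∀ c, c = 2 → m * c = 2 * m := by rintro c rfl; ring
  have key : ∀ c d, c = d ∨ m * c + m ≤ m * d ∨ m * d + m ≤ m * c := by
    intro c d
    rcases lt_trichotomy c d with h | h | h
    · right; left
      calc m * c + m = m * (c + 1) := by ring
        _ ≤ _ := Nat.mul_le_mul_left _ (by omega)
    · exact Or.inl h
    · right; right
      calc m * d + m = m * (d + 1) := by ring
        _ ≤ _ := Nat.mul_le_mul_left _ (by omega)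
  have h5 : 5 * m ≤ H := by
    have := hX 2 (by omega)
    omega
  have hN : H = 2 * (m * N) + 5 * m := by rw [hH]; ring
  have rE : ∀ j c, j < m → c < 2 * N + 3 → 2 * m ≤ bE m H j c ∧ bE m H j c ≤ 2 * H - 2 * m - 1 := by
    intro j c hj hc
    have a1 := hX c hc
    unfold bE
    split_ifs <;> omega
  have rO : ∀ j c, j < m → c < 2 * N + 3 → 2 * m ≤ bO m H j c ∧ bO m H j c ≤ 2 * H - 2 * m - 1 := by
    intro j c hj hc
    have a1 := hX c hc
    unfold bO
    split_ifs <;> omega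
  have iE : ∀ i c j d, i < m → c < 2 * N + 3 → j < m → d < 2 * N + 3 →
      bE m H i c = bE m H j d → i = j ∧ c = d := by
    intro i c j d hi hc hj hd h
    have a1 := hX c hc
    have a2 := hX d hd
    have a3 := h0 c
    have a4 := h0 d
    have a5 := h2 c
    have a6 := h2 d
    rcases key c d with h' | h'
    · subst h'
      refine ⟨?_, rfl⟩
      unfold bE at h
      split_ifs at h <;> omega
    · exfalso
      unfold bE at h
      split_ifs at h <;> omega
  have iO : ∀ i c j d, i < m → c < 2 * N + 3 → j < m → d < 2 * N + 3 →
      bO m H i c = bO m H j d → i = j ∧ c = d := by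
    intro i c j d hi hc hj hd h
    have a1 := hX c hc
    have a2 := hX d hd
    have a3 := h0 c
    have a4 := h0 d
    have a5 := h2 c
    have a6 := h2 d
    rcases key c d with h' | h'
    · subst h'
      refine ⟨?_, rfl⟩
      unfold bO at h
      split_ifs at h <;> omega
    · exfalso
      unfold bO at h
      split_ifs at h <;> omega
  have iEO : ∀ i c j d, i < m → c < 2 * N + 3 → j < m → d < 2 * N + 3 →
      bE m H i c ≠ bO m H j d := by
    intro i c j d hi hc hj hd h
    have a1 := hX c hc
    have a2 := hX d hd
    have a3 := h0 c
    have a4 := h0 d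
    have a5 := h2 c
    have a6 := h2 d
    rcases key c d with h' | h'
    · subst h'
      unfold bE bO at h
      split_ifs at h <;> omega
    · unfold bE bO at h
      split_ifs at h <;> omega
  have hsub : N * (2 * H - 1 - m) + N * m = N * (2 * H - 1) := by
    rw [← Nat.mul_add]; congr 1; omega
  have hadd : N * (2 * H - 1 + m) = N * (2 * H - 1) + N * m := by ring
  have hmN : N * m = m * N := Nat.mul_comm _ _
  have hcmp : (N + 2) * (2 * H - 1) ≤ m * (2 * H - 1) ∨
      m * (2 * H - 1) ≤ (N + 1) * (2 * H - 1) := by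
    rcases le_or_gt (N + 2) m with h | h
    · exact Or.inl (Nat.mul_le_mul_right _ h)
    · exact Or.inr (Nat.mul_le_mul_right _ (by omega))
  have hx1 : (N + 2) * (2 * H - 1) = N * (2 * H - 1) + 2 * (2 * H - 1) := by ring
  have hx2 : (N + 1) * (2 * H - 1) = N * (2 * H - 1) + (2 * H - 1) := by ring
  refine chiLA_eq_three (by omega) (by omega)
    (il (fun j => if j = m then 0 else j) (fun j => 2 * m - 1 - j))
    (fun i c => il (fun j => bE m H j c) (fun j => bO m H j c) i)
    (3 * H + m - 2 + N * (2 * H - 1 - m)) (3 * H + 3 * m - 3 + N * (2 * H - 1 + m))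
    (m * (2 * H - 1)) ?_ ?_ ?_ ?_ ?_ ?_ ?_ ?_
  · simp [il]
  · rw [il_even]; simp
  · refine good_of_halves m (2 * N + 3) (2 * H - 2 * m - 1) ?_ _ _ (bE m H) (bO m H)
      ?_ ?_ ?_ ?_ ?_ ?_ ?_ iE iO iEO ?_ ?_ ?_ ?_
    · have : 2 * m * (2 * N + 3) = 2 * (m * (2 * N + 3)) := by ring
      omega
    · intro j h1 h2
      simp only [if_neg (show ¬ j = m by omega)]
      omega
    · intro j h2
      omega
    · intro j c hj hc
      have := rE j c hj hc
      omega
    · intro j c hj hc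
      have := rO j c hj hc
      omega
    · intro i j _ h1 _ h2 h
      simpa only [if_neg (show ¬ j = m by omega), if_neg (show ¬ i = m by omega)] using h
    · intro i j h1 h2 h
      omega
    · intro i j _ h1 h2
      simp only [if_neg (show ¬ i = m by omega)]
      omega
    · intro i j c _ h1 h2 h3
      have := rE j c h2 h3
      simp only [if_neg (show ¬ i = m by omega)]
      omega
    · intro i j c _ h1 h2 h3
      have := rO j c h2 h3
      simp only [if_neg (show ¬ i = m by omega)]
      omega
    · intro i j c h1 h2 h3
      have := rE j c h2 h3
      omega
    · intro i j c h1 h2 h3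
      have := rO j c h2 h3
      omega
  · intro i hi
    obtain ⟨j, hj, rfl | rfl⟩ := even_or_odd_lt hi
    · simp only [il_even, il_odd]
      rw [sum_bE m H j N hj hH.ge, if_neg (by omega), if_pos (by omega)]
      omega
    · rw [show 2 * j + 1 + 1 = 2 * (j + 1) by ring]
      simp only [il_even, il_odd]
      rw [sum_bO m H j N hj hH.ge, if_neg (show ¬ (2 * j + 1) % 2 = 0 by omega)]
      split_ifs <;> omega
  · intro c hc
    rw [sum_il]
    exact col_sum m H N c hm hH.ge hc
  · omega
  · omega
  · omega

/-- membership test on naturals -/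
def hasN (x : ℕ) (l : List ℕ) : Bool := l.any (fun y => Nat.beq x y)

/-- exhaustive check for the exceptional fan -/
def chk : Bool :=
  (List.range 8).all fun e1 => (List.range 8).all fun e2 => hasN e2 [0, e1] || hasN e1 [0] ||
  (List.range 8).all fun e3 => hasN e3 [0, e1, e2] ||
  (List.range 8).all fun s1 => hasN s1 [0, e1, e2, e3] ||
  (List.range 8).all fun s2 => hasN s2 [0, e1, e2, e3, s1] ||
  (List.range 8).all fun s0 => !(Nat.beq (e1 + s0) (e2 + e3 + s2)) ||
    hasN s0 [0, e1, e2, e3, s1, s2] ||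
  (List.range 8).all fun s3 => !(Nat.beq (e1 + e2 + s1) (e3 + s3)) ||
    hasN s3 [0, e1, e2, e3, s1, s2, s0] || Nat.beq (e1 + s0) (e3 + s3)

lemma hasN_nil (x : ℕ) : hasN x [] = false := rfl

lemma hasN_cons {x y : ℕ} {l : List ℕ} (h : x ≠ y) (hl : hasN x l = false) :
    hasN x (y :: l) = false := by
  have h' : Nat.beq x y = false := by
    rw [← Bool.not_eq_true]
    exact fun e => h (Nat.eq_of_beq_eq_true e)
  unfold hasN at hl ⊢
  rw [List.any_cons, h', hl]
  rfl

lemma or_step {c r : Bool} (h : (c || r) = true) (hc : c = false) : r = true := by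
  rw [hc] at h
  exact h

lemma or_false_of {c r : Bool} (h : c = false) (hc : r = false) : (c || r) = false := by
  rw [hc, h]
  rfl

lemma not_beq_of {a b : ℕ} (h : a = b) : (!(Nat.beq a b)) = false := by
  rw [h, Nat.beq_refl]
  rfl

lemma all_eight {p : ℕ → Bool} (h : (List.range 8).all p = true) (x : Fin 8) :
    p x.val = true :=
  List.all_eq_true.mp h x.val (List.mem_range.mpr x.2)

lemma chk_true : chk = true := by
  rfl

lemma finite_search : ∀ e1 e2 : Fin 8, 1 ≤ e1.val → 1 ≤ e2.val → e1 ≠ e2 →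
    ∀ e3 : Fin 8, 1 ≤ e3.val → e3 ≠ e1 → e3 ≠ e2 →
    ∀ s1 : Fin 8, 1 ≤ s1.val → s1 ≠ e1 → s1 ≠ e2 → s1 ≠ e3 →
    ∀ s2 : Fin 8, 1 ≤ s2.val → s2 ≠ e1 → s2 ≠ e2 → s2 ≠ e3 → s2 ≠ s1 →
    ∀ s0 : Fin 8, e1.val + s0.val = e2.val + e3.val + s2.val → 1 ≤ s0.val → s0 ≠ e1 → s0 ≠ e2 →
      s0 ≠ e3 → s0 ≠ s1 → s0 ≠ s2 →
    ∀ s3 : Fin 8, e1.val + e2.val + s1.val = e3.val + s3.val → 1 ≤ s3.val → s3 ≠ e1 → s3 ≠ e2 →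
      s3 ≠ e3 → s3 ≠ s1 → s3 ≠ s2 → s3 ≠ s0 → e1.val + s0.val = e3.val + s3.val := by
  intro e1 e2 a1 a2 a3 e3 b1 b2 b3 s1 c1 c2 c3 c4 s2 d1 d2 d3 d4 d5 s0 g0 g1 g2 g3 g4 g5 g6
    s3 h0 h1 h2 h3 h4 h5 h6 h7
  have V : ∀ {a b : Fin 8}, a ≠ b → a.val ≠ b.val := fun h h' => h (Fin.ext h')
  have Z : ∀ {a : Fin 8}, 1 ≤ a.val → a.val ≠ 0 := fun h => Nat.one_le_iff_ne_zero.mp h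
  have H := chk_true
  unfold chk at H
  have H1 := all_eight (all_eight H e1) e2
  have H2 := all_eight (or_step H1 (or_false_of (hasN_cons (Z a2) (hasN_cons (V a3.symm) (hasN_nil _))) (hasN_cons (Z a1) (hasN_nil _)))) e3
  have H3 := all_eight (or_step H2 (hasN_cons (Z b1) (hasN_cons (V b2) (hasN_cons (V b3) (hasN_nil _))))) s1
  have H4 := all_eight (or_step H3 (hasN_cons (Z c1) (hasN_cons (V c2) (hasN_cons (V c3) (hasN_cons (V c4) (hasN_nil _)))))) s2
  have H5 := all_eight (or_step H4 (hasN_cons (Z d1) (hasN_cons (V d2) (hasN_cons (V d3) (hasN_cons (V d4) (hasN_cons (V d5) (hasN_nil _))))))) s0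
  have H6 := all_eight (or_step H5 (or_false_of (not_beq_of g0) (hasN_cons (Z g1) (hasN_cons (V g2) (hasN_cons (V g3) (hasN_cons (V g4) (hasN_cons (V g5) (hasN_cons (V g6) (hasN_nil _))))))))) s3
  exact Nat.eq_of_beq_eq_true (or_step H6 (or_false_of (not_beq_of h0) (hasN_cons (Z h1) (hasN_cons (V h2) (hasN_cons (V h3) (hasN_cons (V h4) (hasN_cons (V h5) (hasN_cons (V h6) (hasN_cons (V h7) (hasN_nil _))))))))))

lemma four_le (f : Sym2 (Fin 4 ⊕ Fin 1) → ℕ)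
    (hf : IsLocalAntimagic (joinG (pathGraph 4) (⊥ : SimpleGraph (Fin 1))) f) :
    4 ≤ colorCount (joinG (pathGraph 4) (⊥ : SimpleGraph (Fin 1))) f := by
  by_contra hlt
  obtain ⟨w, hw⟩ : ∃ w, w = vertexWeight (joinG (pathGraph 4) (⊥ : SimpleGraph (Fin 1))) f :=
    ⟨_, rfl⟩
  have hadj := hf.2
  rw [← hw] at hadj
  have n01 : w (Sum.inl 0) ≠ w (Sum.inl 1) := hadj ((joinG_adj_ll _ _).2 (by decide))
  have n12 : w (Sum.inl 1) ≠ w (Sum.inl 2) := hadj ((joinG_adj_ll _ _).2 (by decide))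
  have n23 : w (Sum.inl 2) ≠ w (Sum.inl 3) := hadj ((joinG_adj_ll _ _).2 (by decide))
  have nr : ∀ i, w (Sum.inl i) ≠ w (Sum.inr 0) := fun i => hadj (joinG_adj_lr _ _)
  have hcard : ∀ a b c d, ({w a, w b, w c, w d} : Finset ℕ).card < 4 := by
    intro a b c d
    refine lt_of_le_of_lt (Finset.card_le_card ?_) (not_le.1 hlt)
    rw [← hw]
    intro x hx
    simp only [Finset.mem_insert, Finset.mem_singleton] at hx
    rw [Finset.mem_image]
    rcases hx with rfl | rfl | rfl | rfl <;> exact ⟨_, Finset.mem_univ _, rfl⟩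
  have e02 : w (Sum.inl 0) = w (Sum.inl 2) := by
    by_contra hne
    have := hcard (Sum.inl 0) (Sum.inl 1) (Sum.inl 2) (Sum.inr 0)
    rw [Finset.card_insert_of_notMem, Finset.card_insert_of_notMem,
      Finset.card_insert_of_notMem, Finset.card_singleton] at this
    · omega
    · simpa using nr 2
    · simpa using ⟨n12, nr 1⟩
    · simpa using ⟨n01, hne, nr 0⟩
  have e13 : w (Sum.inl 1) = w (Sum.inl 3) := by
    by_contra hne
    have := hcard (Sum.inl 1) (Sum.inl 2) (Sum.inl 3) (Sum.inr 0)
    rw [Finset.card_insert_of_notMem, Finset.card_insert_of_notMem,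
      Finset.card_insert_of_notMem, Finset.card_singleton] at this
    · omega
    · simpa using nr 3
    · simpa using ⟨n23, nr 2⟩
    · simpa using ⟨n12, hne, nr 1⟩
  have hbij := hf.1
  rw [ncard_edgeSet, ← range_edgeOf] at hbij
  have hlab : ∀ x, 1 ≤ f (edgeOf 4 1 x) ∧ f (edgeOf 4 1 x) < 8 := by
    intro x
    have := hbij.1 ⟨x, rfl⟩
    simp only [Set.mem_Icc] at this
    omega
  have hdis : ∀ x y, x ≠ y → f (edgeOf 4 1 x) ≠ f (edgeOf 4 1 y) := by
    intro x y hxy h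
    exact hxy (edgeOf_injective 4 1 (hbij.2.1 ⟨x, rfl⟩ ⟨y, rfl⟩ h))
  let g : EIdx 4 1 → Fin 8 := fun x => ⟨f (edgeOf 4 1 x), (hlab x).2⟩
  have hg1 : ∀ x, 1 ≤ (g x).val := fun x => (hlab x).1
  have hgd : ∀ x y, x ≠ y → g x ≠ g y := by
    intro x y hxy h
    exact hdis x y hxy (congrArg Fin.val h)
  have sw : ∀ x y : Fin 4 ⊕ Fin 1, f s(x, y) = f s(y, x) := fun x y => by rw [Sym2.eq_swap]
  have w0 : w (Sum.inl 0) = (g (Sum.inl 0)).val + (g (Sum.inr (0, 0))).val := by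
    rw [hw, vertexWeight_eq, Fintype.sum_sum_type]
    simp [Fin.sum_univ_four, joinG_adj_ll, joinG_adj_lr]
    rfl
  have w1 : w (Sum.inl 1) = (g (Sum.inl 0)).val + (g (Sum.inl 1)).val +
      (g (Sum.inr (1, 0))).val := by
    rw [hw, vertexWeight_eq, Fintype.sum_sum_type]
    simp [Fin.sum_univ_four, joinG_adj_ll, joinG_adj_lr]
    rw [sw (Sum.inl 1) (Sum.inl 0)]
    rfl
  have w2 : w (Sum.inl 2) = (g (Sum.inl 1)).val + (g (Sum.inl 2)).val +
      (g (Sum.inr (2, 0))).val := by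
    rw [hw, vertexWeight_eq, Fintype.sum_sum_type]
    simp [Fin.sum_univ_four, joinG_adj_ll, joinG_adj_lr]
    rw [sw (Sum.inl 2) (Sum.inl 1)]
    rfl
  have w3 : w (Sum.inl 3) = (g (Sum.inl 2)).val + (g (Sum.inr (3, 0))).val := by
    rw [hw, vertexWeight_eq, Fintype.sum_sum_type]
    simp [Fin.sum_univ_four, joinG_adj_ll, joinG_adj_lr]
    rw [sw (Sum.inl 3) (Sum.inl 2)]
    rfl
  have hfin := finite_search (g (Sum.inl 0)) (g (Sum.inl 1)) (hg1 _) (hg1 _) (hgd _ _ (by decide))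
    (g (Sum.inl 2)) (hg1 _) (hgd _ _ (by decide)) (hgd _ _ (by decide))
    (g (Sum.inr (1, 0))) (hg1 _) (hgd _ _ (by decide)) (hgd _ _ (by decide)) (hgd _ _ (by decide))
    (g (Sum.inr (2, 0))) (hg1 _) (hgd _ _ (by decide)) (hgd _ _ (by decide)) (hgd _ _ (by decide))
    (hgd _ _ (by decide))
    (g (Sum.inr (0, 0))) (by omega) (hg1 _) (hgd _ _ (by decide)) (hgd _ _ (by decide))
    (hgd _ _ (by decide)) (hgd _ _ (by decide)) (hgd _ _ (by decide))
    (g (Sum.inr (3, 0))) (by omega) (hg1 _) (hgd _ _ (by decide)) (hgd _ _ (by decide))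
    (hgd _ _ (by decide)) (hgd _ _ (by decide)) (hgd _ _ (by decide)) (hgd _ _ (by decide))
  omega

/-- path labels for the exceptional fan -/
def xe (i : ℕ) : ℕ := if i < 4 then i else 0

/-- spoke labels for the exceptional fan -/
def xs (i _c : ℕ) : ℕ := if i = 0 then 6 else if i = 1 then 5 else if i = 2 then 7 else 4

lemma exceptional : chiLA (joinG (pathGraph 4) (⊥ : SimpleGraph (Fin 1))) = 4 := by
  have hgood : GoodLabels 4 1 xe xs := by
    constructor <;> intros <;> simp only [xe, xs] at * <;> grind
  have hl : ∀ i : Fin 4, vertexWeight (joinG (pathGraph 4) (⊥ : SimpleGraph (Fin 1)))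
      (mkF xe xs) (Sum.inl i) =
        if i.val = 1 then 8 else if i.val = 2 then 12 else 7 := by
    intro i
    rw [weight_inl xe xs rfl rfl]
    fin_cases i <;> simp [xe, xs]
  have hr : ∀ c : Fin 1, vertexWeight (joinG (pathGraph 4) (⊥ : SimpleGraph (Fin 1)))
      (mkF xe xs) (Sum.inr c) = 22 := by
    intro c
    rw [weight_inr xe xs]
    simp [Finset.sum_range_succ, xs]
  have hla : IsLocalAntimagic (joinG (pathGraph 4) (⊥ : SimpleGraph (Fin 1))) (mkF xe xs) := by
    refine ⟨hgood.bijOn, ?_⟩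
    rintro (i | c) (j | d) hadj
    · rw [hl, hl]
      rw [joinG_adj_ll] at hadj
      split_ifs <;> omega
    · rw [hl, hr]; split_ifs <;> omega
    · rw [hl, hr]; split_ifs <;> omega
    · exact absurd hadj (joinG_adj_rr c d)
  have hcc : colorCount (joinG (pathGraph 4) (⊥ : SimpleGraph (Fin 1))) (mkF xe xs) = 4 := by
    refine le_antisymm ?_ (four_le _ hla)
    have hsub : Finset.univ.image (vertexWeight (joinG (pathGraph 4) (⊥ : SimpleGraph (Fin 1)))
        (mkF xe xs)) ⊆ {7, 8, 12, 22} := by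
      intro x hx
      obtain ⟨v, _, rfl⟩ := Finset.mem_image.1 hx
      rcases v with i | c
      · rw [hl]; split_ifs <;> simp
      · rw [hr]; simp
    exact (Finset.card_le_card hsub).trans Finset.card_le_four
  apply le_antisymm
  · exact Nat.sInf_le ⟨_, hla, hcc⟩
  · refine le_csInf ⟨4, _, hla, hcc⟩ ?_
    rintro n ⟨f, hf, rfl⟩
    exact four_le f hf

/-- Theorem: For all integers `m, n ≥ 1` with `(m,n) ≠ (2,1)`,
`χ_la(P_{2m} ∨ O_{2n−1}) = 3`; in the exceptional case, `χ_la(P_4 ∨ O_1) = 4`. -/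
theorem chiLA_path_join_null_odd (m n : ℕ) (hm : 1 ≤ m) (hn : 1 ≤ n) :
    (¬(m = 2 ∧ n = 1) →
      chiLA (joinG (pathGraph (2 * m)) (⊥ : SimpleGraph (Fin (2 * n - 1)))) = 3) ∧
    chiLA (joinG (pathGraph 4) (⊥ : SimpleGraph (Fin 1))) = 4 := by
  refine ⟨fun hex => ?_, exceptional⟩
  rcases Nat.lt_or_ge n 2 with h | h
  · obtain rfl : n = 1 := by omega
    change chiLA (joinG (pathGraph (2 * m)) (⊥ : SimpleGraph (Fin 1))) = 3
    have h4 : m = 1 ∨ (∃ r, 1 ≤ r ∧ m = 2 * r + 1) ∨ (∃ r, 1 ≤ r ∧ m = 4 * r) ∨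
        (∃ r, 1 ≤ r ∧ m = 4 * r + 2) := by
      rcases Nat.lt_or_ge m 2 with h1 | h1
      · left; omega
      · right
        have h2 : m % 2 = 1 ∨ m % 4 = 0 ∨ m % 4 = 2 := by omega
        rcases h2 with h2 | h2 | h2
        · left; exact ⟨m / 2, by omega, by omega⟩
        · right; left; exact ⟨m / 4, by omega, by omega⟩
        · right; right; exact ⟨m / 4, by omega, by omega⟩
    rcases h4 with rfl | ⟨r, hr, rfl⟩ | ⟨r, hr, rfl⟩ | ⟨r, hr, rfl⟩
    · exact fan_one
    · exact fan_odd r hr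
    · exact fan_four r hr
    · exact fan_two r hr
  · obtain ⟨N, rfl⟩ : ∃ N, n = N + 2 := ⟨n - 2, by omega⟩
    have : 2 * (N + 2) - 1 = 2 * N + 3 := by omega
    rw [this]
    exact big_case m N hm
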